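/- For every n ≥ 1 and m ≥ 0, the number of lecture hall partitions of length n with sum m equals the number of bounded partitions relative to n with sum m. -/

import Mathlib

/-!
Once its two neighbours are fixed, the `i`-th part of a lecture hall partition ranges over an
interval, and reflecting every second part in the middle of its interval, starting with the last
but one, is an involution (Bousquet-Mélou and Eriksson, *Lecture hall partitions*). Write `|λ|ₒ`
for the sum of the last part, the last but two, and so on, and `|λ|ₑ` for the sum of the others.
The involution fixes `|λ|ₒ`, and turns `|λ|ₑ` into `2|λ|ₒ - |λ|ₑ - ⌈(n + 1) λₙ / n⌉`. Reflecting
and then appending a part exceeding its least value `⌈(n + 1) λₙ / n⌉` by `s` therefore replaces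
`(|λ|ₒ, |λ|ₑ)` by `(2|λ|ₒ - |λ|ₑ + s, |λ|ₒ)`, and carries `(i + 1, i)` to `(i + 2, i + 1)`. So
lecture hall partitions correspond to multiplicities of the pairs `(1, 0), …, (n, n - 1)`, that is,
to partitions into odd parts below `2n`. These are equinumerous with the bounded partitions because
`∏_{i ≤ n} (1 + xⁱ) · ∏_{i ≤ n} (1 - x²ⁱ⁻¹) = ∏_{n < i ≤ 2n} (1 - xⁱ)`.
-/

namespace LectureHall

/-- The least possible `(i+1)`-st part of a lecture hall partition whose `i`-th part is `a`,
namely `⌈(i + 1) a / i⌉`. For `i = 0` the division by zero returns the value `0`, as it should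
with the convention that the zeroth part is `0`. -/
def succMin (i a : ℕ) : ℕ := ((i + 1) * a) ⌈/⌉ i

/-- The greatest possible `i`-th part of a lecture hall partition whose `(i+1)`-st part is `b`,
namely `⌊i b / (i + 1)⌋`. -/
def predMax (i b : ℕ) : ℕ := i * b / (i + 1)

lemma succMin_zero_left (a : ℕ) : succMin 0 a = 0 := by simp [succMin]

lemma succMin_le_iff {i a b : ℕ} (hi : i ≠ 0) : succMin i a ≤ b ↔ (i + 1) * a ≤ i * b :=
  ceilDiv_le_iff_le_mul (Nat.pos_of_ne_zero hi)

lemma le_predMax_iff {i a b : ℕ} : a ≤ predMax i b ↔ (i + 1) * a ≤ i * b := by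
  rw [predMax, Nat.le_div_iff_mul_le i.succ_pos, mul_comm]

lemma succMin_le_iff_le_predMax {i a b : ℕ} (ha : i = 0 → a = 0) :
    succMin i a ≤ b ↔ a ≤ predMax i b := by
  rcases eq_or_ne i 0 with rfl | hi
  · simp [succMin_zero_left, ha]
  · rw [succMin_le_iff hi, le_predMax_iff]

lemma succMin_le_iff_div_le_div {i a b : ℕ} (hi : i ≠ 0) :
    succMin i a ≤ b ↔ (a : ℚ) / i ≤ b / (i + 1) := by
  rw [succMin_le_iff hi, div_le_div_iff₀ (by positivity) (by positivity), mul_comm, mul_comm i]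
  exact_mod_cast Iff.rfl

-- `(i + 2) / (i + 1)` and `i / (i + 1)` add up to `2`, so the ceiling and the floor compensate.
lemma succMin_succ_add_predMax (i a : ℕ) : succMin (i + 1) a + predMax i a = 2 * a := by
  have hle : predMax i a ≤ 2 * a := by
    refine Nat.div_le_of_le_mul ?_
    nlinarith
  suffices succMin (i + 1) a = 2 * a - predMax i a by omega
  refine eq_of_forall_ge_iff fun b ↦ ?_
  calc succMin (i + 1) a ≤ b
      ↔ (i + 2) * a ≤ (i + 1) * b := succMin_le_iff i.succ_ne_zero
    _ ↔ 2 * a * (i + 1) ≤ i * a + b * (i + 1) := by constructor <;> intro h <;> linarith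
    _ ↔ 2 * a ≤ (i * a + b * (i + 1)) / (i + 1) := (Nat.le_div_iff_mul_le i.succ_pos).symm
    _ ↔ 2 * a - predMax i a ≤ b := by
      rw [Nat.add_mul_div_right _ _ i.succ_pos, predMax, Nat.sub_le_iff_le_add']

variable {n : ℕ}

/-- The parts of a sequence `l` of length `n`, numbered from `1` as in the paper and extended by
zeros: `part l (i + 1) = l i` for `i < n`. -/
def part (l : Fin n → ℕ) : ℕ → ℕ
  | 0 => 0
  | i + 1 => if h : i < n then l ⟨i, h⟩ else 0

@[simp] lemma part_zero (l : Fin n → ℕ) : part l 0 = 0 := rfl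

lemma part_succ (l : Fin n → ℕ) {i : ℕ} (hi : i < n) : part l (i + 1) = l ⟨i, hi⟩ := dif_pos hi

lemma part_snoc_of_le (l : Fin n → ℕ) (a : ℕ) {i : ℕ} (hi : i ≤ n) :
    part (Fin.snoc l a : Fin (n + 1) → ℕ) i = part l i := by
  rcases i with _ | i
  · rfl
  · rw [part_succ _ (by omega), part_succ _ hi]
    exact Fin.snoc_castSucc (α := fun _ ↦ ℕ) a l ⟨i, hi⟩

lemma part_snoc_last (l : Fin n → ℕ) (a : ℕ) :
    part (Fin.snoc l a : Fin (n + 1) → ℕ) (n + 1) = a := by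
  rw [part_succ _ n.lt_succ_self]
  exact Fin.snoc_last (α := fun _ ↦ ℕ) a l

/-- Lecture hall partitions of length `n`; the `i`-th part is `l (i - 1)`. -/
def IsLectureHall (l : Fin n → ℕ) : Prop :=
  ∀ i j : Fin n, i ≤ j → (l i : ℚ) / ((i : ℕ) + 1) ≤ (l j : ℚ) / ((j : ℕ) + 1)

lemma isLectureHall_iff_succMin_le {l : Fin n → ℕ} :
    IsLectureHall l ↔ ∀ i < n, succMin i (part l i) ≤ part l (i + 1) := by
  rcases n with _ | n
  · simp [IsLectureHall]
  change Monotone (fun i : Fin (n + 1) ↦ (l i : ℚ) / ((i : ℕ) + 1)) ↔ _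
  rw [Fin.monotone_iff_le_succ, Nat.forall_lt_succ_left, Fin.forall_iff, part_zero,
    succMin_zero_left]
  simp only [zero_le, true_and]
  refine forall₂_congr fun i hi ↦ ?_
  rw [succMin_le_iff_div_le_div i.succ_ne_zero, part_succ l (by omega), part_succ l (by omega)]
  simp [Fin.castSucc, Fin.succ]

lemma isLectureHall_snoc_iff {l : Fin n → ℕ} {a : ℕ} :
    IsLectureHall (Fin.snoc l a : Fin (n + 1) → ℕ) ↔
      IsLectureHall l ∧ succMin n (part l n) ≤ a := by
  rw [isLectureHall_iff_succMin_le, isLectureHall_iff_succMin_le, Nat.forall_lt_succ_right,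
    part_snoc_last, part_snoc_of_le l a le_rfl]
  refine and_congr_left' (forall₂_congr fun i hi ↦ ?_)
  rw [part_snoc_of_le l a hi.le, part_snoc_of_le l a hi]

namespace IsLectureHall

variable {l : Fin n → ℕ} {i : ℕ}

lemma succMin_le (h : IsLectureHall l) (hi : i < n) : succMin i (part l i) ≤ part l (i + 1) :=
  isLectureHall_iff_succMin_le.1 h i hi

lemma le_predMax (h : IsLectureHall l) (hi : i < n) : part l i ≤ predMax i (part l (i + 1)) :=
  (succMin_le_iff_le_predMax (by rintro rfl; rfl)).1 (h.succMin_le hi)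

end IsLectureHall

/-- The involution of Bousquet-Mélou and Eriksson. Given its neighbours, the `(i+1)`-st part of a
lecture hall partition ranges over an interval from `succMin` to `predMax`; the involution reflects
every second part in the middle of its interval, starting with the last but one. -/
def reflect (l : Fin n → ℕ) (i : Fin n) : ℕ :=
  if Even (n + i : ℕ) then
    succMin i (part l i) + predMax (i + 1) (part l (i + 2)) - l i
  else l i

lemma part_reflect_of_even (l : Fin n → ℕ) {i : ℕ} (hi : Even (n + i)) :
    part (reflect l) i = part l i := by
  rcases i with _ | i
  · rfl
  by_cases hin : i < n
  · rw [part_succ _ hin, part_succ _ hin, reflect, if_neg]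
    exact Nat.even_add_one.1 hi
  · simp [part, hin]

lemma IsLectureHall.part_reflect_add_part {l : Fin n → ℕ} (h : IsLectureHall l) {i : ℕ}
    (hin : i < n) (hi : Even (n + i)) :
    part (reflect l) (i + 1) + part l (i + 1) =
      succMin i (part l i) + predMax (i + 1) (part l (i + 2)) := by
  have hmax : part l (i + 1) ≤ predMax (i + 1) (part l (i + 2)) :=
    h.le_predMax (by grind)
  rw [part_succ _ hin] at hmax ⊢
  rw [part_succ _ hin, reflect, if_pos hi]
  exact Nat.sub_add_cancel (le_add_left hmax)

lemma IsLectureHall.reflect {l : Fin n → ℕ} (h : IsLectureHall l) : IsLectureHall (reflect l) := by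
  refine isLectureHall_iff_succMin_le.2 fun i hi ↦ ?_
  by_cases hpar : Even (n + i)
  · have hsum := h.part_reflect_add_part hi hpar
    have hmax : part l (i + 1) ≤ predMax (i + 1) (part l (i + 2)) :=
      h.le_predMax (by grind)
    rw [part_reflect_of_even l hpar]
    omega
  · rw [part_reflect_of_even l (i := i + 1) (by grind),
      succMin_le_iff_le_predMax (by rintro rfl; rfl)]
    rcases i with _ | i
    · simp
    · have hsum := h.part_reflect_add_part (i := i) (by omega) (by grind)
      have hmin := h.succMin_le (i := i) (by omega)
      change part (LectureHall.reflect l) (i + 1) ≤ predMax (i + 1) (part l (i + 2))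
      omega

lemma IsLectureHall.reflect_reflect {l : Fin n → ℕ} (h : IsLectureHall l) :
    LectureHall.reflect (LectureHall.reflect l) = l := by
  funext i
  by_cases hi : Even (n + i : ℕ)
  · have hsum := h.part_reflect_add_part i.2 hi
    have hsum' := h.reflect.part_reflect_add_part i.2 hi
    rw [part_reflect_of_even l hi, part_reflect_of_even l (i := i + 2) (by grind)] at hsum'
    rw [part_succ _ i.2] at hsum hsum'
    rw [part_succ _ i.2] at hsum hsum'
    simp only [Fin.eta] at hsum hsum'
    omega
  · rw [LectureHall.reflect, if_neg hi, LectureHall.reflect, if_neg hi]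

/-- The extensions of a lecture hall partition by one further part, parametrized by the amount by
which the new part exceeds its least possible value. -/
def snocEquiv (n : ℕ) :
    {l : Fin n → ℕ // IsLectureHall l} × ℕ ≃ {l : Fin (n + 1) → ℕ // IsLectureHall l} where
  toFun p := ⟨Fin.snoc p.1.1 (succMin n (part p.1.1 n) + p.2),
    isLectureHall_snoc_iff.2 ⟨p.1.2, Nat.le_add_right _ _⟩⟩
  invFun l := (⟨Fin.init l.1, (isLectureHall_snoc_iff.1 ((Fin.snoc_init_self l.1).symm ▸ l.2)).1⟩,
    l.1 (Fin.last n) - succMin n (part (Fin.init l.1) n))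
  left_inv p := by simp
  right_inv l := by
    have hl := (isLectureHall_snoc_iff.1 ((Fin.snoc_init_self l.1).symm ▸ l.2)).2
    ext1
    simp only [Nat.add_sub_cancel' hl, Fin.snoc_init_self]

/-- `reflect` as a permutation of the lecture hall partitions of length `n`. -/
def reflectPerm (n : ℕ) : Equiv.Perm {l : Fin n → ℕ // IsLectureHall l} :=
  Function.Involutive.toPerm (fun l ↦ ⟨reflect l.1, l.2.reflect⟩)
    fun l ↦ Subtype.ext l.2.reflect_reflect

section Weights

open Finset

/-- The sum of the last part, the last but two, and so on, written `|λ|ₒ` in the paper. -/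
def oddWeight (l : Fin n → ℕ) : ℕ := ∑ i : Fin n, if Odd (n + i : ℕ) then l i else 0

/-- The sum of the last but one part, the last but three, and so on, written `|λ|ₑ` in the
paper. -/
def evenWeight (l : Fin n → ℕ) : ℕ := ∑ i : Fin n, if Even (n + i : ℕ) then l i else 0

lemma oddWeight_add_evenWeight (l : Fin n → ℕ) : oddWeight l + evenWeight l = ∑ i, l i := by
  rw [oddWeight, evenWeight, ← sum_add_distrib]
  refine sum_congr rfl fun i _ ↦ ?_
  by_cases hi : Even (n + i : ℕ) <;> simp [hi, ← Nat.not_even_iff_odd]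

lemma oddWeight_snoc (l : Fin n → ℕ) (a : ℕ) :
    oddWeight (Fin.snoc l a : Fin (n + 1) → ℕ) = evenWeight l + a := by
  have hpar (i : ℕ) : Odd (n + 1 + i) ↔ Even (n + i) := by grind
  simp [oddWeight, evenWeight, Fin.sum_univ_castSucc, hpar]

lemma evenWeight_snoc (l : Fin n → ℕ) (a : ℕ) :
    evenWeight (Fin.snoc l a : Fin (n + 1) → ℕ) = oddWeight l := by
  have hpar (i : ℕ) : Even (n + 1 + i) ↔ Odd (n + i) := by grind
  simp [oddWeight, evenWeight, Fin.sum_univ_castSucc, hpar, ← Nat.not_even_iff_odd (n := n + n)]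

lemma oddWeight_reflect (l : Fin n → ℕ) : oddWeight (reflect l) = oddWeight l :=
  sum_congr rfl fun _ _ ↦ if_ctx_congr Iff.rfl
    (fun hi ↦ if_neg (Nat.not_even_iff_odd.2 hi)) fun _ ↦ rfl

lemma sum_succMin_add_predMax (f : ℕ → ℕ) (n : ℕ) :
    (∑ i ∈ range n, if Even (n + i) then succMin i (f i) + predMax (i + 1) (f (i + 2)) else 0)
      + succMin n (f n) = 2 * ∑ i ∈ range n, if Odd (n + i) then f (i + 1) else 0 := by
  induction n using Nat.twoStepInduction with
  | zero => simp [succMin_zero_left]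
  | one => simpa [predMax] using succMin_succ_add_predMax 0 (f 1)
  | more n ih _ =>
    have heven (i : ℕ) : Even (n + 2 + i) ↔ Even (n + i) := by grind
    have hodd (i : ℕ) : Odd (n + 2 + i) ↔ Odd (n + i) := by grind
    have hlast := succMin_succ_add_predMax (n + 1) (f (n + 2))
    rw [sum_range_succ, sum_range_succ, sum_range_succ, sum_range_succ]
    simp_rw [heven, hodd]
    rw [if_pos (by grind), if_neg (by grind), if_neg (by grind), if_pos (by grind)]
    linarith

lemma IsLectureHall.evenWeight_add_evenWeight_reflect {l : Fin n → ℕ} (h : IsLectureHall l) :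
    evenWeight l + evenWeight (LectureHall.reflect l) + succMin n (part l n) = 2 * oddWeight l := by
  have heven : evenWeight l + evenWeight (LectureHall.reflect l) = ∑ i ∈ range n,
      if Even (n + i) then succMin i (part l i) + predMax (i + 1) (part l (i + 2)) else 0 := by
    rw [evenWeight, evenWeight, ← sum_add_distrib, sum_range]
    refine sum_congr rfl fun i _ ↦ ?_
    split_ifs with hi
    · rw [← h.part_reflect_add_part i.2 hi, part_succ _ i.2, part_succ _ i.2, add_comm]
    · rfl
  have hodd : oddWeight l = ∑ i ∈ range n, if Odd (n + i) then part l (i + 1) else 0 := by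
    rw [oddWeight, sum_range]
    simp only [part_succ _ (Fin.is_lt _)]
  rw [heven, hodd, sum_succMin_add_predMax]

lemma exists_equiv_oddWeight_eq_and_evenWeight_eq (n : ℕ) :
    ∃ e : {l : Fin n → ℕ // IsLectureHall l} ≃ (Fin n → ℕ), ∀ l,
      oddWeight l.1 = ∑ i : Fin n, ((i : ℕ) + 1) * e l i ∧
      evenWeight l.1 = ∑ i : Fin n, (i : ℕ) * e l i := by
  induction n with
  | zero =>
    have : Unique {l : Fin 0 → ℕ // IsLectureHall l} :=
      { default := ⟨Fin.elim0, fun i ↦ i.elim0⟩, uniq := fun _ ↦ Subsingleton.elim _ _ }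
    exact ⟨Equiv.ofUnique _ _, fun l ↦ by simp [oddWeight, evenWeight]⟩
  | succ n ih =>
    obtain ⟨e, he⟩ := ih
    let e' : {l : Fin (n + 1) → ℕ // IsLectureHall l} ≃ (Fin (n + 1) → ℕ) :=
      (snocEquiv n).symm.trans <| (((reflectPerm n).trans e).prodCongr (Equiv.refl ℕ)).trans <|
        (Equiv.prodComm _ _).trans (Fin.consEquiv fun _ ↦ ℕ)
    refine ⟨e', fun l' ↦ ?_⟩
    obtain ⟨⟨l, s⟩, rfl⟩ := (snocEquiv n).surjective l'
    set c := e (reflectPerm n l) with hc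
    have he' : e' (snocEquiv n (l, s)) = Fin.cons s c := by simp [e', Fin.consEquiv, hc]
    have hrefl := l.2.evenWeight_add_evenWeight_reflect
    obtain ⟨hodd, heven⟩ : oddWeight (reflect l.1) = ∑ i : Fin n, ((i : ℕ) + 1) * c i ∧
      evenWeight (reflect l.1) = ∑ i : Fin n, (i : ℕ) * c i := he (reflectPerm n l)
    rw [oddWeight_reflect] at hodd
    rw [he']
    simp only [snocEquiv, Equiv.coe_fn_mk, oddWeight_snoc, evenWeight_snoc,
      Fin.sum_univ_succ, Fin.cons_zero, Fin.cons_succ, Fin.val_zero, Fin.val_succ]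
    refine ⟨?_, by rw [hodd]; ring⟩
    have hsum : ∑ i : Fin n, ((i : ℕ) + 1 + 1) * c i + ∑ i : Fin n, (i : ℕ) * c i =
        2 * ∑ i : Fin n, ((i : ℕ) + 1) * c i := by
      rw [← sum_add_distrib, mul_sum]
      exact sum_congr rfl fun i _ ↦ by ring
    linarith

lemma natCard_isLectureHall (n m : ℕ) :
    Nat.card {l : Fin n → ℕ // IsLectureHall l ∧ ∑ i, l i = m} =
      Nat.card {c : Fin n → ℕ // ∑ i : Fin n, (2 * (i : ℕ) + 1) * c i = m} := by
  obtain ⟨e, he⟩ := exists_equiv_oddWeight_eq_and_evenWeight_eq n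
  have hsum (l : {l : Fin n → ℕ // IsLectureHall l}) :
      ∑ i, l.1 i = ∑ i : Fin n, (2 * (i : ℕ) + 1) * e l i := by
    rw [← oddWeight_add_evenWeight, (he l).1, (he l).2, ← sum_add_distrib]
    exact sum_congr rfl fun i _ ↦ by ring
  exact Nat.card_congr <| (Equiv.subtypeSubtypeEquivSubtypeInter IsLectureHall _).symm.trans <|
    e.subtypeEquiv fun l ↦ by rw [hsum]

end Weights

section GeneratingFunctions

open Finset PowerSeries

lemma prod_one_add_pow_mul_prod_one_sub_pow_odd {R : Type*} [CommRing R] (x : R) (n : ℕ) :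
    (∏ i ∈ Ioc 0 n, (1 + x ^ i)) * ∏ i ∈ range n, (1 - x ^ (2 * i + 1)) =
      ∏ i ∈ Ioc n (2 * n), (1 - x ^ i) := by
  induction n with
  | zero => simp
  | succ n ih =>
    have hbot : ∏ i ∈ Ioc n (2 * n + 1), (1 - x ^ i) =
        (1 - x ^ (n + 1)) * ∏ i ∈ Ioc (n + 1) (2 * n + 1), (1 - x ^ i) := by
      rw [← insert_Ioc_add_one_left_eq_Ioc (a := n) (by omega), prod_insert (by simp)]
    calc _ = (∏ i ∈ Ioc n (2 * n), (1 - x ^ i)) * (1 - x ^ (2 * n + 1)) * (1 + x ^ (n + 1)) := by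
          rw [prod_Ioc_succ_top n.zero_le, prod_range_succ, ← ih]
          ring
      _ = (∏ i ∈ Ioc (n + 1) (2 * n + 1), (1 - x ^ i)) * (1 - x ^ (2 * n + 2)) := by
          rw [← prod_Ioc_succ_top (by omega), hbot]
          ring
      _ = _ := (prod_Ioc_succ_top (by omega) _).symm

lemma mk_natCard_partition_eq_genFun {R : Type*} [CommSemiring R] (q : ℕ → ℕ → Prop)
    [DecidableRel q] :
    PowerSeries.mk (fun m ↦
        (Nat.card {p : m.Partition // ∀ x ∈ p.parts, q x (p.parts.count x)} : R)) =
      Nat.Partition.genFun fun x c ↦ if q x c then 1 else 0 := by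
  classical
  simp_rw [Nat.Partition.genFun, Nat.card_eq_fintype_card, Fintype.card_subtype, card_filter,
    Finsupp.prod, prod_boole]
  simp

/-- The number of partitions of `m` whose parts lie in `s ∪ t`, the parts from `s` being distinct;
it is meant for disjoint `s` and `t`. -/
noncomputable def partitionCount (s t : Finset ℕ) (m : ℕ) : ℕ :=
  Nat.card {p : m.Partition // ∀ x ∈ p.parts, x ∈ s ∧ p.parts.count x ≤ 1 ∨ x ∈ t}

section Topology

open scoped PowerSeries.WithPiTopology

variable {R : Type*} [CommRing R] [TopologicalSpace R] [IsTopologicalRing R] [T2Space R]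

lemma tsum_X_pow_mul_one_sub {k : ℕ} (hk : k ≠ 0) :
    (∑' j : ℕ, (X : R⟦X⟧) ^ (k * j)) * (1 - X ^ k) = 1 := by
  simp_rw [pow_mul]
  exact WithPiTopology.tsum_pow_mul_one_sub_of_constantCoeff_eq_zero (by simp [hk])

lemma one_add_tsum_X_pow {k : ℕ} (hk : k ≠ 0) :
    1 + ∑' j : ℕ, (X : R⟦X⟧) ^ (k * (j + 1)) = ∑' j : ℕ, (X : R⟦X⟧) ^ (k * j) := by
  have hsum : Summable fun j : ℕ ↦ ((X : R⟦X⟧) ^ k) ^ j :=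
    WithPiTopology.summable_pow_of_constantCoeff_eq_zero (by simp [hk])
  simp_rw [pow_mul]
  rw [hsum.tsum_eq_zero_add, pow_zero]

lemma hasProd_mk_partitionCount {s t : Finset ℕ} (hs : 0 ∉ s) (ht : 0 ∉ t) :
    HasProd
      (fun i ↦ if i ∈ t then ∑' j : ℕ, (X : R⟦X⟧) ^ (i * j) else if i ∈ s then 1 + X ^ i else 1)
      (PowerSeries.mk fun m ↦ (partitionCount s t m : R)) := by
  unfold partitionCount
  rw [← (add_left_injective 1).hasProd_iff (by rintro (_ | i) hi <;> simp_all),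
    mk_natCard_partition_eq_genFun fun x c ↦ x ∈ s ∧ c ≤ 1 ∨ x ∈ t]
  refine (Nat.Partition.hasProd_genFun (R := R) _).congr_fun fun i ↦ ?_
  rw [Function.comp_apply]
  split_ifs with hit his
  · simp [hit, one_add_tsum_X_pow]
  · simp [hit, his]
  · simp [hit, his]

end Topology

open scoped PowerSeries.WithPiTopology in
lemma mk_partitionCount_mul_prod {R : Type*} [CommRing R] {s t : Finset ℕ} (hs : 0 ∉ s)
    (ht : 0 ∉ t) (hst : Disjoint s t) :
    PowerSeries.mk (fun m ↦ (partitionCount s t m : R)) * ∏ i ∈ t, (1 - X ^ i) =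
      ∏ i ∈ s, (1 + X ^ i) := by
  let _ : TopologicalSpace R := ⊥
  have : DiscreteTopology R := ⟨rfl⟩
  have hmk : PowerSeries.mk (fun m ↦ (partitionCount s t m : R)) =
      (∏ i ∈ s, (1 + X ^ i)) * ∏ i ∈ t, ∑' j : ℕ, X ^ (i * j) := by
    rw [(hasProd_mk_partitionCount (R := R) hs ht).unique
      (hasProd_prod_of_ne_finset_one (s := s ∪ t) (by simp +contextual)), prod_union hst]
    congr 1
    · exact prod_congr rfl fun i hi ↦ by rw [if_neg (disjoint_left.1 hst hi), if_pos hi]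
    · exact prod_congr rfl fun i hi ↦ if_pos hi
  have hgeom : (∏ i ∈ t, ∑' j : ℕ, (X : R⟦X⟧) ^ (i * j)) * ∏ i ∈ t, (1 - X ^ i) = 1 := by
    rw [← prod_mul_distrib]
    exact prod_eq_one fun i hi ↦ tsum_X_pow_mul_one_sub (ne_of_mem_of_not_mem hi ht)
  rw [hmk, mul_assoc, hgeom, mul_one]

lemma partitionCount_Ioc_eq_partitionCount_odd (n : ℕ) :
    partitionCount (Ioc 0 n) (Ioc n (2 * n)) =
      partitionCount ∅ (univ.image fun i : Fin n ↦ 2 * (i : ℕ) + 1) := by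
  set O := (univ.image fun i : Fin n ↦ 2 * (i : ℕ) + 1) with hO
  have hodd : PowerSeries.mk (fun m ↦ (partitionCount ∅ O m : ℤ)) *
      ∏ i ∈ range n, (1 - X ^ (2 * i + 1)) = 1 := by
    have hmul := mk_partitionCount_mul_prod (R := ℤ) (notMem_empty 0) (t := O) (by simp [hO])
      (disjoint_empty_left O)
    rwa [hO, prod_image fun i _ j _ h ↦ by omega, prod_empty,
      Fin.prod_univ_eq_prod_range fun i ↦ 1 - X ^ (2 * i + 1)] at hmul
  have hne : ∏ i ∈ Ioc n (2 * n), (1 - X ^ i : ℤ⟦X⟧) ≠ 0 := by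
    refine prod_ne_zero_iff.2 fun i hi h ↦ ?_
    have hi0 : i ≠ 0 := by grind
    simpa [hi0] using congrArg constantCoeff h
  have hmk : PowerSeries.mk (fun m ↦ (partitionCount (Ioc 0 n) (Ioc n (2 * n)) m : ℤ)) =
      PowerSeries.mk fun m ↦ (partitionCount ∅ O m : ℤ) := by
    refine mul_right_cancel₀ hne ?_
    rw [mk_partitionCount_mul_prod (by simp) (by simp) (Ioc_disjoint_Ioc_of_le le_rfl),
      ← prod_one_add_pow_mul_prod_one_sub_pow_odd, mul_left_comm, hodd, mul_one]
  ext m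
  simpa using congrArg (coeff m) hmk

lemma natCard_sum_mul_eq_partitionCount {ι : Type*} [Fintype ι] {w : ι → ℕ}
    (hw : Function.Injective w) (hpos : ∀ i, 0 < w i) (m : ℕ) :
    Nat.card {c : ι → ℕ // ∑ i, w i * c i = m} = partitionCount ∅ (univ.image w) m := by
  classical
  let e : (ι → ℕ) ≃ Multiset ι :=
    Finsupp.equivFunOnFinite.symm.trans Multiset.toFinsupp.symm.toEquiv
  have he (c : ι → ℕ) : ((e c).map w).sum = ∑ i, w i * c i := by
    rw [sum_multiset_map_count, sum_subset (subset_univ _) (by simp +contextual)]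
    exact sum_congr rfl fun i _ ↦ by simp [e, mul_comm]
  let f (c : {c : ι → ℕ // ∑ i, w i * c i = m}) :
      {p : m.Partition // ∀ x ∈ p.parts, x ∈ (∅ : Finset ℕ) ∧ p.parts.count x ≤ 1 ∨
        x ∈ univ.image w} :=
    ⟨⟨(e c.1).map w, by simp +contextual [Multiset.mem_map, hpos], (he c.1).trans c.2⟩, by
      simp +contextual⟩
  refine Nat.card_eq_of_bijective f ⟨fun c d hcd ↦ ?_, fun p ↦ ?_⟩
  · have hmap : (e c.1).map w = (e d.1).map w := congrArg (fun p ↦ p.1.parts) hcd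
    exact Subtype.ext (e.injective (Multiset.map_injective hw hmap))
  · obtain ⟨⟨s, hs, hsum⟩, hp⟩ := p
    have : CanLift ℕ ι w (· ∈ Set.range w) := ⟨fun _ hx ↦ hx⟩
    lift s to Multiset ι using by simpa using hp
    obtain ⟨c, rfl⟩ := e.surjective s
    exact ⟨⟨c, (he c).symm.trans hsum⟩, rfl⟩

lemma natCard_bounded_eq_partitionCount (n m : ℕ) :
    Nat.card {p : Nat.Partition m //
        (∀ x ∈ p.parts, x ≤ 2 * n) ∧ (∀ x ∈ p.parts, x ≤ n → p.parts.count x ≤ 1)} =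
      partitionCount (Ioc 0 n) (Ioc n (2 * n)) m := by
  refine Nat.card_congr (Equiv.subtypeEquivRight fun p ↦ ?_)
  rw [← forall₂_and]
  refine forall₂_congr fun x hx ↦ ?_
  have hpos : 0 < x := p.parts_pos hx
  simp only [mem_Ioc]
  omega

end GeneratingFunctions

end LectureHall

/-- For every `n ≥ 1` and `m ≥ 0`, the number of lecture hall partitions
of length `n` with sum `m` equals the number of bounded partitions relative to `n`
with sum `m`. -/
theorem lecture_hall_eq_bounded_count (n m : ℕ) (hn : 1 ≤ n) :
    Nat.card {l : Fin n → ℕ //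
        (∀ i j : Fin n, i ≤ j → (l i : ℚ) / ((i : ℕ) + 1) ≤ (l j : ℚ) / ((j : ℕ) + 1)) ∧
        ∑ i, l i = m} =
    Nat.card {p : Nat.Partition m //
        (∀ x ∈ p.parts, x ≤ 2 * n) ∧ (∀ x ∈ p.parts, x ≤ n → p.parts.count x ≤ 1)} := by
  calc _ = Nat.card {c : Fin n → ℕ // ∑ i : Fin n, (2 * (i : ℕ) + 1) * c i = m} :=
        LectureHall.natCard_isLectureHall n m
    _ = LectureHall.partitionCount ∅ (Finset.univ.image fun i : Fin n ↦ 2 * (i : ℕ) + 1) m :=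
        LectureHall.natCard_sum_mul_eq_partitionCount (fun i j h ↦ by grind) (by simp) m
    _ = LectureHall.partitionCount (Finset.Ioc 0 n) (Finset.Ioc n (2 * n)) m := by
        rw [LectureHall.partitionCount_Ioc_eq_partitionCount_odd]
    _ = _ := (LectureHall.natCard_bounded_eq_partitionCount n m).symm
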